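/- Let k, r ∈ ℕ, let M be a finite multiset of vectors in {0,1,□}^d with cover (R_M, T_M), and let M' ⊆ M be such that the compatibility graph on M' with threshold r has at most k connected components, with γ_max(M') the maximum diameter of a connected component. Then there exists D' ⊆ [d] with |D'| ≤ k·γ_max(M')·(|M'|−1) + |R_M|·(|M'|−1)·(r+1) + |T_M| such that the following holds: there exist a completion of M' and a partition of that completion into at most k parts, each of diameter at most r, if and only if the multiset M'_{D'} of restrictions of the vectors of M' to the coordinates in D' admits a completion together with a partition into at most k parts, each of diameter at most r. -/

import Mathlib

open scoped Classical

/-- δ(a,b) for incomplete vectors: the number of coordinates on which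
both entries are known and differ. -/
noncomputable def pdist {ι : Type} [Fintype ι] (a b : ι → Option Bool) : ℕ :=
  (Finset.univ.filter fun i => ∃ x y : Bool, a i = some x ∧ b i = some y ∧ x ≠ y).card

/-- The compatibility graph on a finite set of incomplete vectors with threshold ρ. -/
def compatGraph {ι : Type} [Fintype ι] (S : Finset (ι → Option Bool)) (ρ : ℕ) :
    SimpleGraph {x // x ∈ S} :=
  SimpleGraph.fromRel fun a b => pdist a.1 b.1 ≤ ρ

/-- γ_max: the maximum diameter of a connected component of the compatibility
graph on `S` with threshold ρ. -/
noncomputable def gammaMax {ι : Type} [Fintype ι]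
    (S : Finset (ι → Option Bool)) (ρ : ℕ) : ℕ :=
  sSup {n | ∃ a b : {x // x ∈ S}, (compatGraph S ρ).Reachable a b ∧ pdist a.1 b.1 = n}

/-- `Mc` is a completion of `M`: a multiset of complete vectors in bijection with `M`,
agreeing with the corresponding vectors on all non-missing entries. -/
def IsCompletion {ι : Type} (M : Multiset (ι → Option Bool))
    (Mc : Multiset (ι → Bool)) : Prop :=
  Multiset.Rel (fun a c => ∀ i (x : Bool), a i = some x → c i = x) M Mc

/-- The multiset `Mc` of complete vectors can be partitioned into at most `k` parts,
each of diameter at most `r`. -/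
def HasDiamPartitionM {ι : Type} [Fintype ι] (Mc : Multiset (ι → Bool)) (k r : ℕ) : Prop :=
  ∃ P : Multiset (Multiset (ι → Bool)), Multiset.card P ≤ k ∧ P.join = Mc ∧
    ∀ p ∈ P, ∀ a ∈ p, ∀ b ∈ p, hammingDist a b ≤ r

/-- The restriction of an incomplete vector to the coordinates in `D`. -/
def restrictV {ι : Type} (D : Finset ι) (a : ι → Option Bool) :
    {i // i ∈ D} → Option Bool :=
  fun i => a i.1

/-!
Work with a family of incomplete vectors whose labels group them into at most `k` classes of
diameter at most `γ`; for the theorem the classes are the connected components.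

If `r` is at least `γ` times the number of vectors, the classes themselves solve the instance:
fill the missing entries of a class from a common center chosen by majority, the ties being
distributed evenly by Hall's theorem. A solvable instance needs no coordinates at all.

Otherwise `r < γ n`, and it suffices to choose coordinates on which any two vectors keep all their
disagreements, or more than `r` of them: in a solution of the restricted instance the vectors of
one part then agree wherever they are known outside the chosen coordinates. For pairs meeting the
cover this costs `r + 1` coordinates each. For the remaining vectors, discard `T` and the
disagreements with a representative of each of the `p ≤ k` classes, which costs `(n - p) γ`; then
`r + 1` rounds of Bondy's theorem separate the classes at cost `(p - 1) (r + 1) ≤ (p - 1) γ n`, and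
`(n - p) γ + (p - 1) γ n = p γ (n - 1)`.
-/

open Finset

/-- The coordinates on which two incomplete vectors are both known and differ, as a set; `pdist` is
its cardinality. -/
noncomputable def disagree {ι : Type} [Fintype ι] (a b : ι → Option Bool) : Finset ι :=
  {i | ∃ x y : Bool, a i = some x ∧ b i = some y ∧ x ≠ y}

/-- The complete vector `c` is a completion of the incomplete vector `a`. -/
def Completes {ι : Type} (a : ι → Option Bool) (c : ι → Bool) : Prop :=
  ∀ i (x : Bool), a i = some x → c i = x

/-- The vectors of the family `v` have completions that can be coloured with `k` colours so that
every colour class has diameter at most `r`. This is the clustering problem of the theorem, with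
the partition encoded by a colouring of the index type. -/
def HasColoredCompletion {X : Type*} {ι : Type} [Fintype ι] (v : X → ι → Option Bool) (k r : ℕ) :
    Prop :=
  ∃ (f : X → ι → Bool) (χ : X → Fin k), (∀ x, Completes (v x) (f x)) ∧
    ∀ x y, χ x = χ y → hammingDist (f x) (f y) ≤ r

/-- Restricting `a` and `b` to `D` keeps all their disagreements, or more than `r` of them. This is
what makes a set of coordinates sufficient for deciding the clustering problem. -/
def KeepsDisagreement {ι : Type} [Fintype ι] (D : Finset ι) (r : ℕ) (a b : ι → Option Bool) :
    Prop :=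
  disagree a b ⊆ D ∨ r < #(disagree a b ∩ D)

section Disagree

lemma hammingDist_restrict {ι : Type*} (D : Finset ι) (f g : ι → Bool) :
    hammingDist (fun i : {i // i ∈ D} => f i) (fun i => g i) = #{i ∈ D | f i ≠ g i} := by
  rw [hammingDist, ← card_map (Function.Embedding.subtype _)]
  congr 1
  ext i
  simp [and_comm]

variable {ι : Type} [Fintype ι] {a b : ι → Option Bool} {i : ι}

lemma mem_disagree : i ∈ disagree a b ↔ ∃ x y : Bool, a i = some x ∧ b i = some y ∧ x ≠ y := by
  simp [disagree]

lemma card_disagree (a b : ι → Option Bool) : #(disagree a b) = pdist a b := rfl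

lemma disagree_comm (a b : ι → Option Bool) : disagree a b = disagree b a := by
  ext i
  simp only [mem_disagree]
  constructor <;> rintro ⟨x, y, hx, hy, hxy⟩ <;> exact ⟨y, x, hy, hx, hxy.symm⟩

lemma ne_of_mem_disagree (h : i ∈ disagree a b) : a i ≠ b i := by
  obtain ⟨x, y, hx, hy, hxy⟩ := mem_disagree.1 h
  simpa [hx, hy] using hxy

lemma mem_disagree_of_ne (ha : a i ≠ none) (hb : b i ≠ none) (hab : a i ≠ b i) :
    i ∈ disagree a b := by
  obtain ⟨x, hx⟩ := Option.ne_none_iff_exists'.1 ha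
  obtain ⟨y, hy⟩ := Option.ne_none_iff_exists'.1 hb
  exact mem_disagree.2 ⟨x, y, hx, hy, by simpa [hx, hy] using hab⟩

lemma disagree_self (a : ι → Option Bool) : disagree a a = ∅ :=
  eq_empty_of_forall_notMem fun _ hi => ne_of_mem_disagree hi rfl

lemma mem_disagree_some_comp {p : ι → Bool} :
    i ∈ disagree a (some ∘ p) ↔ a i = some (!p i) := by
  cases hp : p i <;> simp [mem_disagree, hp]

lemma pdist_restrictV (D : Finset ι) (a b : ι → Option Bool) :
    pdist (restrictV D a) (restrictV D b) = #(disagree a b ∩ D) := by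
  rw [← card_disagree, ← card_map (Function.Embedding.subtype _)]
  congr 1
  ext i
  simp [mem_disagree, restrictV]

lemma pdist_restrictV_add_compl (D : Finset ι) (a b : ι → Option Bool) :
    pdist (restrictV D a) (restrictV D b) + pdist (restrictV Dᶜ a) (restrictV Dᶜ b) =
      pdist a b := by
  rw [pdist_restrictV, pdist_restrictV, ← sdiff_eq_inter_compl, card_inter_add_card_sdiff,
    card_disagree]

lemma pdist_le_hammingDist {f g : ι → Bool} (hf : Completes a f) (hg : Completes b g) :
    pdist a b ≤ hammingDist f g := by
  refine card_le_card fun i hi => ?_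
  obtain ⟨x, y, hx, hy, hxy⟩ := mem_disagree.1 hi
  simpa [hf i x hx, hg i y hy] using hxy

lemma KeepsDisagreement.mono {D E : Finset ι} {r : ℕ} (h : KeepsDisagreement D r a b)
    (hDE : D ⊆ E) : KeepsDisagreement E r a b :=
  h.imp (·.trans hDE) (·.trans_le (card_le_card (inter_subset_inter_left hDE)))

lemma KeepsDisagreement.symm {D : Finset ι} {r : ℕ} (h : KeepsDisagreement D r a b) :
    KeepsDisagreement D r b a := by
  rwa [KeepsDisagreement, disagree_comm]

end Disagree

section ColoredCompletion

variable {X : Type*} {ι : Type} [Fintype ι] {v : X → ι → Option Bool} {k r : ℕ}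

lemma HasColoredCompletion.of_card_le {κ : Type*} [Finite κ] (hk : Nat.card κ ≤ k)
    {f : X → ι → Bool} (χ : X → κ) (hf : ∀ x, Completes (v x) (f x))
    (hr : ∀ x y, χ x = χ y → hammingDist (f x) (f y) ≤ r) : HasColoredCompletion v k r :=
  ⟨f, fun x => Fin.castLE hk (Finite.equivFin κ (χ x)), hf,
    fun x y hxy => hr x y (by simpa using hxy)⟩

lemma HasColoredCompletion.restrict (h : HasColoredCompletion v k r) (D : Finset ι) :
    HasColoredCompletion (fun x => restrictV D (v x)) k r := by
  obtain ⟨f, χ, hf, hr⟩ := h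
  refine ⟨fun x i => f x i, χ, fun x i => hf x i, fun x y hxy => le_trans ?_ (hr x y hxy)⟩
  rw [hammingDist_restrict]
  exact card_le_card (filter_subset_filter _ (subset_univ D))

lemma exists_common_completion {κ : Type*} {χ : X → κ} {D : Finset ι}
    (hD : ∀ x y, χ x = χ y → disagree (v x) (v y) ⊆ D) :
    ∃ p : κ → ι → Bool, ∀ x, ∀ i ∉ D, ∀ b, v x i = some b → p (χ x) i = b := by
  refine ⟨fun c i => decide (∃ y, χ y = c ∧ v y i = some true), fun x i hi b hb => ?_⟩
  cases b with
  | true => simpa using ⟨x, rfl, hb⟩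
  | false =>
    simp only [decide_eq_false_iff_not]
    rintro ⟨y, hyx, hy⟩
    exact hi (hD y x hyx (mem_disagree.2 ⟨true, false, hy, hb, by simp⟩))

theorem HasColoredCompletion.of_restrict {D : Finset ι}
    (hD : ∀ x y, KeepsDisagreement D r (v x) (v y))
    (h : HasColoredCompletion (fun x => restrictV D (v x)) k r) : HasColoredCompletion v k r := by
  obtain ⟨f, χ, hf, hr⟩ := h
  have hsub (x y) (hxy : χ x = χ y) : disagree (v x) (v y) ⊆ D := by
    refine (hD x y).resolve_right (not_lt.2 ?_)
    rw [← pdist_restrictV]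
    exact (pdist_le_hammingDist (hf x) (hf y)).trans (hr x y hxy)
  obtain ⟨p, hp⟩ := exists_common_completion hsub
  let g (x : X) (i : ι) : Bool := if hi : i ∈ D then f x ⟨i, hi⟩ else p (χ x) i
  have hgf (x) : (fun i : {i // i ∈ D} => g x i) = f x := funext fun i => by simp [g]
  refine ⟨g, χ, fun x i b hb => ?_, fun x y hxy => le_trans ?_ (hr x y hxy)⟩
  · by_cases hi : i ∈ D
    · simpa [g, hi] using hf x ⟨i, hi⟩ b hb
    · simpa [g, hi] using hp x i hi b hb
  · rw [← hgf x, ← hgf y, hammingDist_restrict]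
    refine card_le_card fun i hi => mem_filter.2 ⟨?_, (mem_filter.1 hi).2⟩
    by_contra hiD
    simp [g, hiD, hxy] at hi

lemma sum_filter_eq_self {κ : Type*} [Fintype κ] [DecidableEq κ] (N : Multiset X) (χ : X → κ) :
    ∑ j, N.filter (χ · = j) = N := by
  induction N using Multiset.induction_on with
  | empty => simp
  | cons x N ih =>
    simp only [Multiset.filter_cons, sum_add_distrib, ih, sum_ite_eq, mem_univ, if_true]
    rfl

lemma HasColoredCompletion.exists_isCompletion (h : HasColoredCompletion v k r)
    (N : Multiset X) :
    ∃ Nc : Multiset (ι → Bool), IsCompletion (N.map v) Nc ∧ HasDiamPartitionM Nc k r := by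
  obtain ⟨f, χ, hf, hr⟩ := h
  refine ⟨N.map f, Multiset.rel_map.2 (Multiset.rel_refl_of_refl_on fun x _ => hf x),
    univ.val.map fun j => (N.filter (χ · = j)).map f, by simp, ?_, ?_⟩
  · conv_rhs => rw [← sum_filter_eq_self N χ]
    exact (map_sum (Multiset.mapAddMonoidHom f) (fun j => N.filter (χ · = j)) univ).symm
  · simp only [Multiset.mem_map]
    rintro _ ⟨j, -, rfl⟩ a ha b hb
    obtain ⟨x, ⟨-, hx⟩, rfl⟩ := by simpa only [Multiset.mem_map, Multiset.mem_filter] using ha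
    obtain ⟨y, ⟨-, hy⟩, rfl⟩ := by simpa only [Multiset.mem_map, Multiset.mem_filter] using hb
    exact hr x y (hx.trans hy.symm)

theorem exists_isCompletion_iff {N : Multiset X} (hN : ∀ x, x ∈ N) :
    (∃ Nc : Multiset (ι → Bool), IsCompletion (N.map v) Nc ∧ HasDiamPartitionM Nc k r) ↔
      HasColoredCompletion v k r := by
  refine ⟨?_, fun h => h.exists_isCompletion N⟩
  rintro ⟨_, hNc, P, hPk, rfl, hP⟩
  have hex (x : X) : ∃ c, Completes (v x) c ∧ ∃ p : {p // p ∈ P.toFinset}, c ∈ p.1 := by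
    obtain ⟨c, hc, hxc⟩ := Multiset.exists_mem_of_rel_of_mem (Multiset.rel_map_left.1 hNc) (hN x)
    obtain ⟨p, hp, hcp⟩ := Multiset.mem_join.1 hc
    exact ⟨c, hxc, ⟨p, Multiset.mem_toFinset.2 hp⟩, hcp⟩
  choose f hf χ hχ using hex
  refine .of_card_le ?_ χ hf fun x y hxy => ?_
  · rw [Nat.card_eq_fintype_card, Fintype.card_coe]
    exact (Multiset.toFinset_card_le P).trans hPk
  · exact hP _ (Multiset.mem_toFinset.1 (χ x).2) _ (hχ x) _ (hxy ▸ hχ y)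

end ColoredCompletion

section BalancedChoice

variable {ι X : Type*} [Fintype ι]

/- Hall's theorem with multiplicities: replace `x` by `cap x` copies of itself. -/
theorem exists_choice_of_card_le_sum_capacity (N : ι → Finset X) (cap : X → ℕ)
    (h : ∀ F : Finset ι, #F ≤ ∑ x ∈ F.biUnion N, cap x) :
    ∃ σ : ι → X, (∀ i, σ i ∈ N i) ∧ ∀ x, #{i | σ i = x} ≤ cap x := by
  let copies (i : ι) : Finset (Σ _ : X, ℕ) := (N i).sigma fun x => range (cap x)
  obtain ⟨τ, hτinj, hτ⟩ : ∃ τ : ι → Σ _ : X, ℕ, Function.Injective τ ∧ ∀ i, τ i ∈ copies i := by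
    refine (all_card_le_biUnion_card_iff_exists_injective copies).1 fun F => ?_
    have hbi : F.biUnion copies = (F.biUnion N).sigma fun x => range (cap x) := by
      ext
      simp only [copies, mem_biUnion, mem_sigma]
      tauto
    simpa [hbi] using h F
  simp only [copies, mem_sigma, mem_range] at hτ
  refine ⟨fun i => (τ i).1, fun i => (hτ i).1, fun x => ?_⟩
  rw [← card_range (cap x)]
  refine card_le_card_of_injOn (fun i => (τ i).2) (fun i hi => ?_) fun i hi j hj hij => ?_
  · obtain rfl := (mem_filter.1 hi).2
    exact mem_range.2 (hτ i).2
  · exact hτinj (Sigma.ext ((mem_filter.1 hi).2.trans (mem_filter.1 hj).2.symm) (heq_of_eq hij))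

theorem exists_balanced_choice (N : ι → Finset X) {t : ℕ} (ht : 0 < t) (hN : ∀ i, t ≤ #(N i)) :
    ∃ σ : ι → X, (∀ i, σ i ∈ N i) ∧ ∀ x, #{i | σ i = x} ≤ #{i | x ∈ N i} ⌈/⌉ t := by
  refine exists_choice_of_card_le_sum_capacity N _ fun F => Nat.le_of_mul_le_mul_left ?_ ht
  calc t * #F = ∑ _ ∈ F, t := by rw [sum_const, smul_eq_mul, mul_comm]
    _ ≤ ∑ i ∈ F, #{x ∈ F.biUnion N | x ∈ N i} := sum_le_sum fun i hi => (hN i).trans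
        (card_le_card fun x hx => mem_filter.2 ⟨mem_biUnion.2 ⟨i, hi, hx⟩, hx⟩)
    _ = ∑ x ∈ F.biUnion N, #{i ∈ F | x ∈ N i} :=
        sum_card_bipartiteAbove_eq_sum_card_bipartiteBelow fun i x => x ∈ N i
    _ ≤ ∑ x ∈ F.biUnion N, t * (#{i | x ∈ N i} ⌈/⌉ t) := sum_le_sum fun x _ =>
        (card_le_card (filter_subset_filter _ (subset_univ F))).trans (le_smul_ceilDiv ht)
    _ = t * ∑ x ∈ F.biUnion N, #{i | x ∈ N i} ⌈/⌉ t := (mul_sum ..).symm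

end BalancedChoice

section Center

variable {X : Type*} {ι : Type} [Fintype X] [Fintype ι] {v : X → ι → Option Bool}

/- A coordinate known to exactly two vectors of the family, which disagree there, costs one of them
a conflict with the center; a balanced choice spreads this cost. -/
lemma exists_center_of_ties (h : ∀ i b, ∃! x, v x i = some b) :
    ∃ p : ι → Bool, ∀ x, 2 * pdist (v x) (some ∘ p) ≤ ∑ y, pdist (v y) (v x) + 1 := by
  have htwo (i) : 2 ≤ #{x | v x i ≠ none} := by
    obtain ⟨x, hx, -⟩ := h i true
    obtain ⟨y, hy, -⟩ := h i false
    refine one_lt_card.2 ⟨x, by simp [hx], y, by simp [hy], ?_⟩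
    rintro rfl
    simp [hx] at hy
  obtain ⟨σ, hσ, hcard⟩ := exists_balanced_choice (fun i => {x | v x i ≠ none}) two_pos htwo
  have hp (i) : ∃ b, v (σ i) i = some (!b) := by
    obtain ⟨b, hb⟩ := Option.ne_none_iff_exists'.1 (mem_filter.1 (hσ i)).2
    exact ⟨!b, by simpa using hb⟩
  choose p hp using hp
  refine ⟨p, fun x => ?_⟩
  have hconflict : pdist (v x) (some ∘ p) ≤ #{i | σ i = x} := card_le_card fun i hi =>
    mem_filter.2 ⟨mem_univ i, (h i _).unique (hp i) (mem_disagree_some_comp.1 hi)⟩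
  have hknown : #{i | v x i ≠ none} ≤ ∑ y, pdist (v y) (v x) := by
    refine (card_le_card fun i hi => ?_).trans (card_biUnion_le (s := univ)
      (t := fun y => disagree (v y) (v x)))
    obtain ⟨b, hb⟩ := Option.ne_none_iff_exists'.1 (mem_filter.1 hi).2
    obtain ⟨y, hy, -⟩ := h i !b
    exact mem_biUnion.2 ⟨y, mem_univ y, mem_disagree.2 ⟨!b, b, hy, hb, by simp⟩⟩
  have := hcard x
  simp only [mem_filter, mem_univ, true_and, Nat.ceilDiv_eq_add_pred_div] at this
  omega

lemma exists_majority (q : X → Option Bool) (h : ¬ ∀ b, ∃! x, q x = some b) :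
    ∃ m : Bool, ∀ x, q x = some (!m) → 2 ≤ #{y | q y = some m} := by
  simp only [Fintype.existsUnique_iff_card_one, Bool.forall_bool, not_and_or] at h
  have hpos {x : X} {b : Bool} (hx : q x = some b) : 0 < #{y | q y = some b} :=
    card_pos.2 ⟨x, by simpa using hx⟩
  rcases le_total #{y | q y = some false} #{y | q y = some true} with hle | hle
  · exact ⟨true, fun x hx => by have := hpos hx; simp only [Bool.not_true] at this; omega⟩
  · exact ⟨false, fun x hx => by have := hpos hx; simp only [Bool.not_false] at this; omega⟩

lemma exists_center_of_no_ties (h : ∀ i, ¬ ∀ b, ∃! x, v x i = some b) :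
    ∃ p : ι → Bool, ∀ x, 2 * pdist (v x) (some ∘ p) ≤ ∑ y, pdist (v y) (v x) := by
  choose p hp using fun i => exists_majority (v · i) (h i)
  refine ⟨p, fun x => ?_⟩
  calc 2 * pdist (v x) (some ∘ p)
      = ∑ i ∈ disagree (v x) (some ∘ p), 2 := by
        rw [sum_const, smul_eq_mul, mul_comm, card_disagree]
    _ ≤ ∑ i ∈ disagree (v x) (some ∘ p), #{y | i ∈ disagree (v y) (v x)} := by
        refine sum_le_sum fun i hi => ?_
        have hxi := mem_disagree_some_comp.1 hi
        refine (hp i x hxi).trans (card_le_card fun y hy => mem_filter.2 ⟨mem_univ y, ?_⟩)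
        exact mem_disagree.2 ⟨p i, !p i, (mem_filter.1 hy).2, hxi, by simp⟩
    _ ≤ ∑ i, #{y | i ∈ disagree (v y) (v x)} := sum_le_sum_of_subset (subset_univ _)
    _ = ∑ y, #{i | i ∈ disagree (v y) (v x)} := .symm <|
        sum_card_bipartiteAbove_eq_sum_card_bipartiteBelow fun y i => i ∈ disagree (v y) (v x)
    _ = ∑ y, pdist (v y) (v x) := by simp only [filter_univ_mem, card_disagree]

theorem exists_balanced_center (v : X → ι → Option Bool) :
    ∃ p : ι → Bool, ∀ x, 2 * pdist (v x) (some ∘ p) ≤ ∑ y, pdist (v y) (v x) + 1 := by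
  let D : Finset ι := {i | ∀ b, ∃! x, v x i = some b}
  obtain ⟨p, hp⟩ := exists_center_of_ties (v := fun x => restrictV D (v x))
    fun i => (mem_filter.1 i.2).2
  obtain ⟨q, hq⟩ := exists_center_of_no_ties (v := fun x => restrictV Dᶜ (v x))
    fun i => by simpa [D, restrictV] using i.2
  let s (i : ι) : Bool := if hi : i ∈ D then p ⟨i, hi⟩ else q ⟨i, mem_compl.2 hi⟩
  have hsp : restrictV D (some ∘ s) = some ∘ p := funext fun i => by simp [restrictV, s]
  have hsq : restrictV Dᶜ (some ∘ s) = some ∘ q :=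
    funext fun i => by simp [restrictV, s, mem_compl.1 i.2]
  refine ⟨s, fun x => ?_⟩
  simp only [← pdist_restrictV_add_compl D, sum_add_distrib, hsp, hsq]
  linarith [hp x, hq x]

lemma hammingDist_getD_le (a b : ι → Option Bool) (p : ι → Bool) :
    hammingDist (fun i => (a i).getD (p i)) (fun i => (b i).getD (p i)) ≤
      pdist a (some ∘ p) + pdist b (some ∘ p) := by
  refine le_trans (card_le_card fun i hi => ?_) (card_union_le _ _)
  simp only [mem_filter, mem_univ, true_and] at hi
  rw [mem_union, ← disagree, ← disagree, mem_disagree_some_comp, mem_disagree_some_comp]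
  revert hi
  rcases a i with _ | _ | _ <;> rcases b i with _ | _ | _ <;> cases p i <;> simp

lemma sum_pdist_le {γ : ℕ} (hγ : ∀ x y, pdist (v x) (v y) ≤ γ) (x : X) :
    ∑ y, pdist (v y) (v x) + γ ≤ γ * Fintype.card X := by
  rw [← add_sum_erase _ _ (mem_univ x), ← card_disagree, disagree_self, card_empty, zero_add,
    mul_comm, ← smul_eq_mul, ← card_univ, ← card_erase_add_one (mem_univ x), succ_nsmul]
  exact Nat.add_le_add_right (sum_le_card_nsmul _ _ _ fun y _ => hγ y x) γ

theorem exists_completion_hammingDist_le {γ : ℕ} (hγ : ∀ x y, pdist (v x) (v y) ≤ γ) :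
    ∃ f : X → ι → Bool, (∀ x, Completes (v x) (f x)) ∧
      ∀ x y, hammingDist (f x) (f y) ≤ γ * Fintype.card X := by
  obtain ⟨p, hp⟩ := exists_balanced_center v
  refine ⟨fun x i => (v x i).getD (p i), fun x i b hb => by simp [hb], fun x y => ?_⟩
  have hconflict (z) : 2 * pdist (v z) (some ∘ p) ≤ γ * Fintype.card X := by
    have hz := hp z
    have hsum := sum_pdist_le hγ z
    rcases Nat.eq_zero_or_pos γ with rfl | hpos <;> omega
  linarith [hammingDist_getD_le (v x) (v y) p, hconflict x, hconflict y]

theorem hasColoredCompletion_of_mul_card_le {κ : Type*} [Finite κ] {k r γ : ℕ} {c : X → κ}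
    (hk : Nat.card κ ≤ k) (hγ : ∀ x y, c x = c y → pdist (v x) (v y) ≤ γ)
    (hr : γ * Fintype.card X ≤ r) : HasColoredCompletion v k r := by
  choose f hf hdist using fun j : κ =>
    exists_completion_hammingDist_le (v := fun x : {x // c x = j} => v x)
      fun x y => hγ x y (x.2.trans y.2.symm)
  have hfc (j y) (hy : c y = j) : f (c y) ⟨y, rfl⟩ = f j ⟨y, hy⟩ := by
    subst hy
    rfl
  refine .of_card_le hk c (f := fun x => f (c x) ⟨x, rfl⟩) (fun x => hf (c x) ⟨x, rfl⟩)
    fun x y hxy => ?_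
  simp only [hfc (c x) y hxy.symm]
  exact (hdist _ _ _).trans ((Nat.mul_le_mul_left γ (Fintype.card_subtype_le _)).trans hr)

end Center

section Separation

variable {ι β : Type*}

/- Bondy's theorem, relative to `U` so that it can be iterated on the coordinates not yet used. -/
theorem exists_card_le_pairwise_eqOn (P : Finset (ι → β)) (U : Set ι) :
    ∃ B : Finset ι, ↑B ⊆ U ∧ #B ≤ #P - 1 ∧
      (P : Set (ι → β)).Pairwise fun p q => Set.EqOn p q B → Set.EqOn p q U := by
  induction P using Finset.induction_on with
  | empty => exact ⟨∅, by simp⟩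
  | insert p P hp ih =>
    obtain ⟨B, hBU, hBcard, hB⟩ := ih
    simp only [coe_insert, card_insert_of_notMem hp, Nat.add_sub_cancel]
    have hsymm (B : Finset ι) : Std.Symm fun p q : ι → β => Set.EqOn p q B → Set.EqOn p q U :=
      ⟨fun _ _ h hqp => (h hqp.symm).symm⟩
    by_cases hex : ∃ q ∈ P, Set.EqOn p q B ∧ ∃ j ∈ U, p j ≠ q j
    · obtain ⟨q, hq, hpq, j, hjU, hj⟩ := hex
      refine ⟨insert j B, by simpa using Set.insert_subset hjU hBU, ?_, ?_⟩
      · have := card_insert_le j B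
        have := card_pos.2 ⟨q, hq⟩
        omega
      refine (Set.pairwise_insert_of_symm_of_notMem (mod_cast hp)).2
        ⟨hB.mono' fun _ _ h hEq => h (hEq.mono (by simp)), fun q' hq' hpq' => ?_⟩
      have hqq' : Set.EqOn q q' B := hpq.symm.trans (hpq'.mono (by simp))
      have hjq : q j = q' j := by
        rcases eq_or_ne q q' with rfl | hne
        · rfl
        · exact hB hq hq' hne hqq' hjU
      exact absurd ((hpq' (by simp)).trans hjq.symm) hj
    · push Not at hex
      exact ⟨B, hBU, hBcard.trans (Nat.sub_le _ _),
        (Set.pairwise_insert_of_symm_of_notMem (mod_cast hp)).2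
          ⟨hB, fun q hq hpq => hex q hq hpq⟩⟩

theorem exists_card_le_separates [DecidableEq β] (P : Finset (ι → β)) (n : ℕ) :
    ∃ B : Finset ι, #B ≤ (#P - 1) * n ∧
      ∀ p ∈ P, ∀ q ∈ P, (∀ i ∉ B, p i = q i) ∨ n ≤ #{i ∈ B | p i ≠ q i} := by
  induction n with
  | zero => exact ⟨∅, by simp⟩
  | succ n ih =>
    obtain ⟨B, hBcard, hB⟩ := ih
    obtain ⟨C, hCB, hCcard, hC⟩ := exists_card_le_pairwise_eqOn P (B : Set ι)ᶜ
    refine ⟨B ∪ C, ?_, fun p hp q hq => or_iff_not_imp_left.2 fun hpq => ?_⟩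
    · rw [mul_add_one]
      exact (card_union_le B C).trans (Nat.add_le_add hBcard hCcard)
    have hout : ¬ ∀ i ∉ B, p i = q i := fun h => hpq fun i hi => h i fun hiB => hi (by simp [hiB])
    obtain ⟨j, hjC, hj⟩ : ∃ j ∈ C, p j ≠ q j := by
      by_contra! hEq
      exact hout fun i hi => hC hp hq (by rintro rfl; simp at hout) hEq (by simpa using hi)
    have hdisj : Disjoint B C := disjoint_coe.1 (disjoint_compl_right.mono_right hCB)
    rw [filter_union, card_union_of_disjoint (disjoint_filter_filter hdisj)]
    exact Nat.add_le_add ((hB p hp q hq).resolve_left hout) (card_pos.2 ⟨j, by simp [hjC, hj]⟩)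

end Separation

section Coordinates

variable {X : Type*} {κ : Type*} {ι : Type} [Fintype X] [Fintype ι] {v : X → ι → Option Bool}
  {c : X → κ} {T : Finset ι} {k r γ : ℕ}

lemma exists_coords_eq_of_class_eq (hT : ∀ x i, v x i = none → i ∈ T)
    (hγ : ∀ x y, c x = c y → pdist (v x) (v y) ≤ γ) :
    ∃ D : Finset ι, T ⊆ D ∧ #D ≤ (Fintype.card X - #(univ.image c)) * γ + #T ∧
      ∀ x y, c x = c y → ∀ i ∉ D, v x i = v y i := by
  let ρ (x : X) : X := Set.rangeSplitting c (Set.rangeFactorization c x)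
  have hcρ (x) : c (ρ x) = c x := Set.apply_rangeSplitting c _
  have hρ {x y} (hxy : c x = c y) : ρ x = ρ y := congrArg (Set.rangeSplitting c) (Subtype.ext hxy)
  have hcard : #(univ.image c) ≤ #(univ.image ρ) := by
    rw [← funext hcρ, ← Function.comp_def, ← image_image]
    exact card_image_le
  let D := ((univ.image ρ)ᶜ.biUnion fun x => disagree (v x) (v (ρ x))) ∪ T
  have hD (x) (i) (hi : i ∉ D) : v x i = v (ρ x) i := by
    simp only [D, mem_union, mem_biUnion, not_or, not_exists, not_and] at hi
    by_cases hx : x ∈ univ.image ρ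
    · obtain ⟨z, -, rfl⟩ := mem_image.1 hx
      rw [hρ (hcρ z)]
    · by_contra hne
      exact hi.1 x (mem_compl.2 hx)
        (mem_disagree_of_ne (fun h => hi.2 (hT _ i h)) (fun h => hi.2 (hT _ i h)) hne)
  refine ⟨D, subset_union_right, ?_, fun x y hxy i hi => by rw [hD x i hi, hD y i hi, hρ hxy]⟩
  refine (card_union_le _ _).trans (Nat.add_le_add_right ?_ _)
  calc _ ≤ #(univ.image ρ)ᶜ * γ := card_biUnion_le_card_mul _ _ _ fun x _ => hγ x _ (hcρ x).symm
    _ ≤ (Fintype.card X - #(univ.image c)) * γ := by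
      rw [card_compl]
      exact Nat.mul_le_mul_right γ (Nat.sub_le_sub_left hcard _)

theorem exists_coords_keepsDisagreement (hT : ∀ x i, v x i = none → i ∈ T)
    (hγ : ∀ x y, c x = c y → pdist (v x) (v y) ≤ γ) (r : ℕ) :
    ∃ D : Finset ι,
      #D ≤ (Fintype.card X - #(univ.image c)) * γ + (#(univ.image c) - 1) * (r + 1) + #T ∧
      ∀ x y, KeepsDisagreement D r (v x) (v y) := by
  obtain ⟨D, hTD, hDcard, hD⟩ := exists_coords_eq_of_class_eq hT hγ
  let w (x : X) (i : ι) : Option Bool := if i ∈ D then none else v x i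
  have hw : Function.FactorsThrough w c := fun x y hxy => funext fun i => by
    by_cases hi : i ∈ D
    · simp [w, hi]
    · simp [w, hi, hD x y hxy i hi]
  have hwcard : #(univ.image w) ≤ #(univ.image c) := by
    obtain ⟨e, he⟩ := (Function.factorsThrough_iff w).1 hw
    rw [he, ← image_image]
    exact card_image_le
  have hdis {x y i} (hi : i ∉ D) : i ∈ disagree (v x) (v y) ↔ w x i ≠ w y i := by
    simp only [w, hi, if_false]
    exact ⟨ne_of_mem_disagree,
      mem_disagree_of_ne (fun h => hi (hTD (hT x i h))) (fun h => hi (hTD (hT y i h)))⟩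
  obtain ⟨B, hBcard, hB⟩ := exists_card_le_separates (univ.image w) (r + 1)
  refine ⟨D ∪ B, ?_, fun x y => ?_⟩
  · have := card_union_le D B
    have := Nat.mul_le_mul_right (r + 1) (Nat.sub_le_sub_right hwcard 1)
    omega
  refine (hB _ (mem_image_of_mem w (mem_univ x)) _ (mem_image_of_mem w (mem_univ y))).imp
    (fun hEq i hi => ?_) fun hr => Nat.lt_of_succ_le (hr.trans (card_le_card fun i hi => ?_))
  · by_contra hiDB
    simp only [mem_union, not_or] at hiDB
    exact (hdis hiDB.1).1 hi (hEq i hiDB.2)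
  · obtain ⟨hiB, hi⟩ := mem_filter.1 hi
    have hiD : i ∉ D := fun hiD => hi (by simp [w, hiD])
    exact mem_inter.2 ⟨(hdis hiD).2 hi, mem_union_right D hiB⟩

lemma sub_mul_add_sub_one_mul_le {m n p : ℕ} (hp : 0 < p) (hpm : p ≤ m) (hmn : m ≤ n)
    (hpk : p ≤ k) (hr : r < γ * n) :
    (m - p) * γ + (p - 1) * (r + 1) ≤ k * γ * (n - 1) := by
  obtain ⟨p, rfl⟩ := Nat.exists_eq_add_one.2 hp
  obtain ⟨e, rfl⟩ := Nat.exists_eq_add_of_le (hpm.trans hmn)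
  calc (m - (p + 1)) * γ + (p + 1 - 1) * (r + 1)
      ≤ e * γ + p * (γ * (p + 1 + e)) := by
        gcongr
        · omega
        · omega
        · exact hr
    _ = (p + 1) * γ * (p + e) := by ring
    _ ≤ k * γ * (p + 1 + e - 1) := by
        gcongr
        omega

lemma exists_coords_keepsDisagreement_of_lt_mul [Finite κ] {n : ℕ} (hk : Nat.card κ ≤ k)
    (hn : Fintype.card X ≤ n) (hT : ∀ x i, v x i = none → i ∈ T)
    (hγ : ∀ x y, c x = c y → pdist (v x) (v y) ≤ γ) (hr : r < γ * n) :
    ∃ D : Finset ι, #D ≤ k * γ * (n - 1) + #T ∧ ∀ x y, KeepsDisagreement D r (v x) (v y) := by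
  rcases isEmpty_or_nonempty X with _ | _
  · exact ⟨∅, by simp⟩
  obtain ⟨D, hDcard, hD⟩ := exists_coords_keepsDisagreement hT hγ r
  have hpk : #(univ.image c) ≤ k := by
    rw [← Set.ncard_coe_finset]
    exact (Set.ncard_le_card _).trans hk
  exact ⟨D, hDcard.trans (Nat.add_le_add_right (sub_mul_add_sub_one_mul_le
    (univ_nonempty.image c).card_pos card_image_le hn hpk hr) _), hD⟩

lemma exists_card_le_keepsDisagreement (r : ℕ) (a b : ι → Option Bool) :
    ∃ D : Finset ι, #D ≤ r + 1 ∧ KeepsDisagreement D r a b := by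
  rcases le_total #(disagree a b) (r + 1) with hle | hle
  · exact ⟨disagree a b, hle, .inl Subset.rfl⟩
  · obtain ⟨D, hD, hcard⟩ := exists_subset_card_eq hle
    exact ⟨D, hcard.le, .inr (by simp [inter_eq_right.2 hD, hcard])⟩

lemma exists_coords_keepsDisagreement_of_mem (v : X → ι → Option Bool) (r : ℕ) (A : Finset X) :
    ∃ D : Finset ι, #D ≤ #A * (Fintype.card X - 1) * (r + 1) ∧
      ∀ x ∈ A, ∀ y, KeepsDisagreement D r (v x) (v y) := by
  choose E hEcard hE using fun x y => exists_card_le_keepsDisagreement r (v x) (v y)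
  refine ⟨A.biUnion fun x => (univ.erase x).biUnion (E x), ?_, fun x hx y => ?_⟩
  · rw [mul_assoc]
    refine card_biUnion_le_card_mul _ _ _ fun x _ => ?_
    rw [← card_univ, ← card_erase_of_mem (mem_univ x)]
    exact card_biUnion_le_card_mul _ _ _ fun y _ => hEcard x y
  · rcases eq_or_ne y x with rfl | hyx
    · exact .inl (by simp [disagree_self])
    · exact (hE x y).mono fun i hi =>
        mem_biUnion.2 ⟨x, hx, mem_biUnion.2 ⟨y, by simp [hyx], hi⟩⟩

theorem exists_coords_hasColoredCompletion_iff [Finite κ] {A : Finset X} (hk : Nat.card κ ≤ k)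
    (hT : ∀ x i, v x i = none → x ∈ A ∨ i ∈ T)
    (hγ : ∀ x y, c x = c y → pdist (v x) (v y) ≤ γ) (r : ℕ) :
    ∃ D : Finset ι,
      #D ≤ k * γ * (Fintype.card X - 1) + #A * (Fintype.card X - 1) * (r + 1) + #T ∧
      (HasColoredCompletion v k r ↔ HasColoredCompletion (fun x => restrictV D (v x)) k r) := by
  by_cases hsolv : HasColoredCompletion v k r
  · exact ⟨∅, by simp, iff_of_true hsolv (hsolv.restrict ∅)⟩
  have hr : r < γ * Fintype.card X :=
    not_le.1 fun hle => hsolv (hasColoredCompletion_of_mul_card_le hk hγ hle)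
  obtain ⟨D₁, hcard₁, hD₁⟩ := exists_coords_keepsDisagreement_of_lt_mul
    (v := fun x : {x // x ∉ A} => v x) (c := fun x => c x) hk (Fintype.card_subtype_le _)
    (fun x i hi => (hT x i hi).resolve_left x.2) (fun x y => hγ x y) hr
  obtain ⟨D₂, hcard₂, hD₂⟩ := exists_coords_keepsDisagreement_of_mem v r A
  refine ⟨D₁ ∪ D₂, ?_, fun h => h.restrict _, .of_restrict fun x y => ?_⟩
  · have := card_union_le D₁ D₂
    omega
  by_cases hx : x ∈ A
  · exact (hD₂ x hx y).mono subset_union_right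
  by_cases hy : y ∈ A
  · exact (hD₂ y hy x).symm.mono subset_union_right
  · exact (hD₁ ⟨x, hx⟩ ⟨y, hy⟩).mono subset_union_left

end Coordinates

lemma pdist_le_gammaMax {ι : Type} [Fintype ι] {S : Finset (ι → Option Bool)} {ρ : ℕ}
    {a b : {x // x ∈ S}} (h : (compatGraph S ρ).Reachable a b) :
    pdist a.1 b.1 ≤ gammaMax S ρ := by
  refine le_csSup ⟨Fintype.card ι, ?_⟩ ⟨a, b, h, rfl⟩
  rintro _ ⟨a, b, -, rfl⟩
  exact card_le_univ (disagree a.1 b.1)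

lemma exists_map_val_eq {α : Type*} [DecidableEq α] (S : Multiset α) :
    ∃ N : Multiset {x // x ∈ S.toFinset}, (∀ x, x ∈ N) ∧ N.map Subtype.val = S := by
  obtain ⟨N, hN⟩ : ∃ N : Multiset {x // x ∈ S.toFinset}, N.map Subtype.val = S :=
    CanLift.prf S fun _ => Multiset.mem_toFinset.2
  refine ⟨N, fun x => (Multiset.mem_map_of_injective Subtype.val_injective).1 ?_, hN⟩
  rw [hN]
  exact Multiset.mem_toFinset.1 x.2

theorem statement_8_general {ι : Type} [Fintype ι] (k r ρ : ℕ) (R M' : Multiset (ι → Option Bool))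
    (T : Finset ι) (hcover : ∀ v ∈ M', ∀ i, v i = none → v ∈ R ∨ i ∈ T)
    (hcomp : Nat.card (compatGraph M'.toFinset ρ).ConnectedComponent ≤ k) :
    ∃ D' : Finset ι,
      #D' ≤ k * gammaMax M'.toFinset ρ * (Multiset.card M' - 1)
          + Multiset.card R * (Multiset.card M' - 1) * (r + 1) + #T ∧
      ((∃ Mc : Multiset (ι → Bool), IsCompletion M' Mc ∧ HasDiamPartitionM Mc k r) ↔
        (∃ Nc : Multiset ({i // i ∈ D'} → Bool),
          IsCompletion (M'.map (restrictV D')) Nc ∧ HasDiamPartitionM Nc k r)) := by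
  let A : Finset {x // x ∈ M'.toFinset} := {x | x.1 ∈ R}
  have hA : #A ≤ Multiset.card R :=
    (card_le_card_of_injOn Subtype.val (fun x hx => by simpa [A] using hx)
      Subtype.val_injective.injOn).trans (Multiset.toFinset_card_le R)
  have hn : Fintype.card {x // x ∈ M'.toFinset} ≤ Multiset.card M' :=
    (Fintype.card_coe _).trans_le (Multiset.toFinset_card_le M')
  obtain ⟨D, hcard, hD⟩ := exists_coords_hasColoredCompletion_iff (A := A) (T := T) hcomp
    (fun x i hi => by simpa [A] using hcover x (Multiset.mem_toFinset.1 x.2) i hi)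
    (fun x y hxy => pdist_le_gammaMax (SimpleGraph.ConnectedComponent.exact hxy)) r
  refine ⟨D, hcard.trans (by gcongr), ?_⟩
  obtain ⟨N, hN, hNM⟩ := exists_map_val_eq M'
  have hfull := exists_isCompletion_iff (v := Subtype.val) (k := k) (r := r) hN
  have hrestrict := exists_isCompletion_iff (v := restrictV D ∘ Subtype.val) (k := k) (r := r) hN
  rw [← Multiset.map_map, hNM] at hrestrict
  rw [hNM] at hfull
  exact hfull.trans (hD.trans hrestrict.symm)

theorem statement_8 {d : ℕ} (k r : ℕ)
    (M R : Multiset (Fin d → Option Bool)) (T : Finset (Fin d))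
    (hRM : R ≤ M)
    (hcover : ∀ v ∈ M, ∀ i : Fin d, v i = none → v ∈ R ∨ i ∈ T)
    (M' : Multiset (Fin d → Option Bool)) (hM'M : M' ≤ M)
    (hcomp : Nat.card (compatGraph M'.toFinset r).ConnectedComponent ≤ k) :
    ∃ D' : Finset (Fin d),
      D'.card ≤ k * gammaMax M'.toFinset r * (Multiset.card M' - 1)
          + Multiset.card R * (Multiset.card M' - 1) * (r + 1) + T.card ∧
      ((∃ Mc : Multiset (Fin d → Bool), IsCompletion M' Mc ∧ HasDiamPartitionM Mc k r) ↔
        (∃ Nc : Multiset ({i // i ∈ D'} → Bool),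
          IsCompletion (M'.map (restrictV D')) Nc ∧ HasDiamPartitionM Nc k r)) :=
  statement_8_general k r r R M' T (fun v hv => hcover v (Multiset.mem_of_le hM'M hv)) hcomp
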